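/- Let R be a ring with a left Artinian left quotient ring Q = C⁻¹R. Then: (1) C' = C, i.e. for c ∈ R, c ∈ C if and only if c + n is a regular element of R̄; (2) the ring R̄ = R/n is a semiprime left Goldie ring and the set C̄ of regular elements of R̄ equals {c + n : c ∈ C}. -/

import Mathlib

open Function

universe u v

/-- A regular element of a ring: a two-sided non-zero-divisor. -/
def IsRegElem {R : Type*} [Ring R] (c : R) : Prop :=
  (∀ x : R, c * x = 0 → x = 0) ∧ (∀ x : R, x * c = 0 → x = 0)

/-- The set `C` of regular elements of a ring. -/
def regSet (R : Type*) [Ring R] : Set R := {c : R | IsRegElem c}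

/-- A (left) ideal is two-sided. -/
def Ideal.IsTwoSidedNC {R : Type*} [Ring R] (I : Ideal R) : Prop :=
  ∀ a ∈ I, ∀ r : R, a * r ∈ I

/-- A prime (two-sided) ideal of a possibly noncommutative ring. -/
def Ideal.IsPrimeNC {R : Type*} [Ring R] (P : Ideal R) : Prop :=
  P ≠ ⊤ ∧ P.IsTwoSidedNC ∧ ∀ a b : R, (∀ r : R, a * r * b ∈ P) → a ∈ P ∨ b ∈ P

/-- The prime radical `n` of a ring: the intersection of all prime ideals. -/
def primeRadical (R : Type*) [Ring R] : Ideal R := sInf {P : Ideal R | P.IsPrimeNC}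

/-- `n` is a nilpotent ideal. -/
def IsNilpotentIdeal {R : Type*} [Ring R] (I : Ideal R) : Prop := ∃ k : ℕ, I ^ (k + 1) = ⊥

/-- `φ : R →+* Q` realizes `Q` as a left quotient ring `C⁻¹R` of `R`:  `R` embeds in `Q`,
every regular element of `R` becomes invertible in `Q`, and every element of `Q` has the
form `(φ c)⁻¹ * (φ r)` with `c` regular. -/
structure IsLeftQuotRing {R : Type u} {Q : Type v} [Ring R] [Ring Q] (φ : R →+* Q) : Prop where
  inj : Function.Injective φ
  isUnit : ∀ c : R, IsRegElem c → IsUnit (φ c)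
  denom : ∀ q : Q, ∃ c r : R, IsRegElem c ∧ φ c * q = φ r

/-- Data of a left quotient ring of `R`. -/
structure LeftQuotData (R : Type u) [Ring R] : Type (u + 1) where
  Q : Type u
  [instQ : Ring Q]
  φ : R →+* Q
  quot : IsLeftQuotRing φ

attribute [instance] LeftQuotData.instQ

/-- `R` has a left Artinian left quotient ring `Q = C⁻¹R`. -/
def HasArtinianLeftQuot (R : Type u) [Ring R] : Prop :=
  ∃ d : LeftQuotData R, IsArtinianRing d.Q

/-- A subset of a ring is a left annihilator. -/
def IsLeftAnnihilatorSet {R : Type*} [Ring R] (A : Set R) : Prop :=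
  ∃ S : Set R, A = {r : R | ∀ s ∈ S, r * s = 0}

/-- The ascending chain condition on left annihilators. -/
def ACCLeftAnnihilators (R : Type*) [Ring R] : Prop :=
  ∀ f : ℕ → Set R, (∀ i, IsLeftAnnihilatorSet (f i)) → (∀ i j, i ≤ j → f i ⊆ f j) →
    ∃ N, ∀ k, N ≤ k → f k = f N

/-- The module `M` contains no infinite direct sum of nonzero submodules. -/
def NoInfiniteIndepFamily (R : Type*) (M : Type*) [Ring R] [AddCommGroup M] [Module R M] : Prop :=
  ¬ ∃ f : ℕ → Submodule R M, (∀ i, f i ≠ ⊥) ∧ iSupIndep f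

/-- A left Goldie ring: ACC on left annihilators and no infinite direct sums of nonzero
left ideals. -/
def IsLeftGoldie (R : Type*) [Ring R] : Prop :=
  ACCLeftAnnihilators R ∧ NoInfiniteIndepFamily R R

/-- The subquotient `n^i/n^{i+1}` of `R` determined by the prime radical `n`. -/
abbrev grPiece (R : Type*) [Ring R] (i : ℕ) :=
  ↥(primeRadical R ^ i) ⧸
    (Submodule.comap (primeRadical R ^ i : Ideal R).subtype (primeRadical R ^ (i + 1)))

/-- The class of `x ∈ n^i` in `n^i/n^{i+1}`. -/
def grMk {R : Type*} [Ring R] (i : ℕ) (x : R) (hx : x ∈ primeRadical R ^ i) : grPiece R i :=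
  Submodule.Quotient.mk ⟨x, hx⟩

/-- The `C̄`-torsion submodule `τ_i` of `n^i/n^{i+1}` (take the span, which coincides with the
set of torsion elements whenever the latter is a submodule, e.g. when `C̄` is a left Ore set);
here `C̄` is represented through `π : R → R̄` as `{c : R | IsRegElem (π c)}`. -/
def tauSub {R : Type u} {Rbar : Type v} [Ring R] [Ring Rbar] (π : R →+* Rbar) (i : ℕ) :
    Submodule R (grPiece R i) :=
  Submodule.span R {u : grPiece R i | ∃ c : R, IsRegElem (π c) ∧ c • u = 0}

/-- The `C̄`-torsionfree module `f_i = (n^i/n^{i+1})/τ_i`. -/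
abbrev fMod {R : Type u} {Rbar : Type v} [Ring R] [Ring Rbar] (π : R →+* Rbar) (i : ℕ) :=
  grPiece R i ⧸ tauSub π i

/-- The class of `x ∈ n^i` in `f_i`. -/
def fMk {R : Type u} {Rbar : Type v} [Ring R] [Ring Rbar] (π : R →+* Rbar) (i : ℕ) (x : R)
    (hx : x ∈ primeRadical R ^ i) : fMod π i :=
  Submodule.Quotient.mk (grMk i x hx)

/-- The subset `C⁻¹K = {(φ c)⁻¹ (φ a) : c ∈ C, a ∈ K}` of a left quotient ring. -/
def locSet {R : Type u} {Q : Type v} [Ring R] [Ring Q] (φ : R →+* Q) (K : Ideal R) : Set Q :=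
  {q : Q | ∃ c a : R, IsRegElem c ∧ a ∈ K ∧ φ c * q = φ a}

/-- A subset of a ring is a left Ore set (multiplicatively closed and satisfying the left
Ore condition). -/
def IsLeftOreSubset {A : Type*} [Ring A] (S : Set A) : Prop :=
  (1 : A) ∈ S ∧ (∀ s ∈ S, ∀ t ∈ S, s * t ∈ S) ∧
    ∀ s ∈ S, ∀ a : A, ∃ t ∈ S, ∃ b : A, t * a = b * s

/-- A left denominator set. -/
def IsLeftDenominatorSet {A : Type*} [Ring A] (S : Set A) : Prop :=
  IsLeftOreSubset S ∧ ∀ a : A, ∀ s ∈ S, a * s = 0 → ∃ t ∈ S, t * a = 0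


/-- A ring is semiprime: it has no nonzero nilpotent (two-sided) ideals. -/
def IsSemiprimeRing (A : Type*) [Ring A] : Prop :=
  ∀ I : Ideal A, I.IsTwoSidedNC → (∃ k : ℕ, I ^ (k + 1) = ⊥) → I = ⊥

section Order

variable {A : Type*} {S : Type*} [Ring A] [Ring S] {ψ : A →+* S}

theorem IsRegElem.mul {c d : A} (hc : IsRegElem c) (hd : IsRegElem d) : IsRegElem (c * d) :=
  ⟨fun x hx ↦ hd.1 x (hc.1 _ (by rwa [← mul_assoc])),
    fun x hx ↦ hc.2 x (hd.2 _ (by rwa [mul_assoc]))⟩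

/-- A form of the left Ore condition that holds for a left order `A` in `S`. -/
theorem IsLeftQuotRing.exists_common_denom (h : IsLeftQuotRing ψ) {s : A} (hs : IsRegElem s)
    (q : S) : ∃ c r : A, IsRegElem c ∧ ψ c * q = ψ r * ψ s := by
  obtain ⟨u, hu⟩ := h.isUnit s hs
  obtain ⟨c, r, hc, hcr⟩ := h.denom (q * ↑u⁻¹)
  refine ⟨c, r, hc, ?_⟩
  rw [← hcr, ← hu]
  simp [mul_assoc]

/-- Elements of the extension to `S` of a left ideal of a left order are left fractions. -/
theorem IsLeftQuotRing.exists_mul_eq_of_mem_map (h : IsLeftQuotRing ψ) (I : Ideal A) {y : S}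
    (hy : y ∈ I.map ψ) : ∃ s a : A, IsRegElem s ∧ a ∈ I ∧ ψ s * y = ψ a := by
  induction hy using Submodule.span_induction with
  | mem x hx =>
    obtain ⟨a, ha, rfl⟩ := hx
    exact ⟨1, a, ⟨by simp, by simp⟩, ha, by simp⟩
  | zero => exact ⟨1, 0, ⟨by simp, by simp⟩, I.zero_mem, by simp⟩
  | add y z _ _ ihy ihz =>
    obtain ⟨s, a, hs, ha, hsa⟩ := ihy
    obtain ⟨t, b, ht, hb, htb⟩ := ihz
    obtain ⟨c, r, hc, hcr⟩ := h.exists_common_denom hs (ψ t)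
    refine ⟨c * t, r * a + c * b, hc.mul ht,
      I.add_mem (I.mul_mem_left _ ha) (I.mul_mem_left _ hb), ?_⟩
    rw [mul_add, map_mul, map_add, map_mul, map_mul, ← hsa, ← htb]
    congr 1
    · rw [hcr, mul_assoc]
    · rw [mul_assoc]
  | smul q y _ ih =>
    obtain ⟨s, a, hs, ha, hsa⟩ := ih
    obtain ⟨c, r, hc, hcr⟩ := h.exists_common_denom hs q
    exact ⟨c, r * a, hc, I.mul_mem_left _ ha, by
      rw [smul_eq_mul, ← mul_assoc, hcr, mul_assoc, hsa, map_mul]⟩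

theorem IsLeftQuotRing.disjoint_map (h : IsLeftQuotRing ψ) {I K : Ideal A} (hIK : Disjoint I K) :
    Disjoint (I.map ψ) (K.map ψ) := by
  rw [Submodule.disjoint_def] at hIK ⊢
  intro y hyI hyK
  obtain ⟨s, a, hs, ha, hsa⟩ := h.exists_mul_eq_of_mem_map I hyI
  obtain ⟨t, b, ht, hb, htb⟩ := h.exists_mul_eq_of_mem_map K hyK
  obtain ⟨c, r, hc, hcr⟩ := h.exists_common_denom hs (ψ t)
  have key : ψ c * (ψ t * y) = ψ (r * a) := by
    rw [← mul_assoc, hcr, mul_assoc, hsa, map_mul]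
  have hEq : c * b = r * a := h.inj (by rw [← key, htb, map_mul])
  have h0 : r * a = 0 :=
    hIK _ (I.mul_mem_left _ ha) (hEq ▸ K.mul_mem_left _ hb)
  rw [h0, map_zero, (h.isUnit c hc).mul_right_eq_zero, (h.isUnit t ht).mul_right_eq_zero] at key
  exact key

theorem noInfiniteIndepFamily_of_isNoetherianRing [IsNoetherianRing S] (h : IsLeftQuotRing ψ) :
    NoInfiniteIndepFamily A A := by
  rintro ⟨f, hne, hind⟩
  have hind' : iSupIndep fun i ↦ Ideal.map ψ (f i) := by
    intro i
    have := h.disjoint_map (hind i)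
    simpa only [Ideal.map_iSup] using this
  have hne' : ∀ i, Ideal.map ψ (f i) ≠ ⊥ := by
    intro i hi
    refine hne i ((Submodule.eq_bot_iff _).2 fun x hx ↦ ?_)
    have : ψ x ∈ Ideal.map ψ (f i) := Ideal.mem_map_of_mem ψ hx
    rw [hi, Submodule.mem_bot, map_eq_zero_iff ψ h.inj] at this
    exact this
  have := WellFoundedGT.finite_of_iSupIndep hind' hne'
  exact not_finite ℕ

theorem accLeftAnnihilators_of_injective [IsNoetherianRing S] (hψ : Function.Injective ψ) :
    ACCLeftAnnihilators A := by
  intro f hf hmono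
  let T : ℕ → Set A := fun i ↦ {s | ∀ r ∈ f i, r * s = 0}
  let L : ℕ →o Ideal S :=
    { toFun i :=
        { carrier := {x | ∀ s ∈ T i, x * ψ s = 0}
          zero_mem' := by simp
          add_mem' := fun ha hb s hs ↦ by rw [add_mul, ha s hs, hb s hs, add_zero]
          smul_mem' := fun c x hx s hs ↦ by rw [smul_eq_mul, mul_assoc, hx s hs, mul_zero] }
      monotone' := fun i j hij x hx s hs ↦ hx s fun r hr ↦ hs r (hmono i j hij hr) }
  have hfL : ∀ i, f i = {r | ψ r ∈ L i} := by
    intro i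
    ext r
    obtain ⟨U, hU⟩ := hf i
    refine ⟨fun hr s hs ↦ by rw [← map_mul, hs r hr, map_zero], fun hr ↦ ?_⟩
    rw [hU]
    intro s hs
    apply hψ
    rw [map_mul, map_zero]
    refine hr s fun r' hr' ↦ ?_
    rw [hU] at hr'
    exact hr' s hs
  obtain ⟨N, hN⟩ := monotone_stabilizes_iff_noetherian.2 ‹IsNoetherianRing S› L
  exact ⟨N, fun k hk ↦ by rw [hfL, hfL, hN k hk]⟩

/-- A left order in a left Noetherian ring is left Goldie. -/
theorem IsLeftQuotRing.isLeftGoldie [IsNoetherianRing S] (h : IsLeftQuotRing ψ) :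
    IsLeftGoldie A :=
  ⟨accLeftAnnihilators_of_injective h.inj, noInfiniteIndepFamily_of_isNoetherianRing h⟩

end Order

section PrimeRadical

variable {R : Type*} [Ring R]

theorem Ideal.IsPrimeNC.le_of_pow_le {P K : Ideal R} (hP : P.IsPrimeNC) {k : ℕ}
    (hK : K ^ (k + 1) ≤ P) : K ≤ P := by
  induction k with
  | zero => simpa [Submodule.pow_one] using hK
  | succ k ih =>
    by_contra hKP
    obtain ⟨a, haK, haP⟩ := SetLike.not_le_iff_exists.1 hKP
    refine hKP (ih fun b hb ↦ (hP.2.2 a b fun r ↦ hK ?_).resolve_left haP)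
    rw [Submodule.pow_succ' K k.succ_ne_zero, mul_assoc]
    exact Ideal.mul_mem_mul haK (Ideal.mul_mem_left _ r hb)

theorem le_primeRadical_of_pow_le {K : Ideal R} {k : ℕ} (hK : K ^ (k + 1) ≤ primeRadical R) :
    K ≤ primeRadical R :=
  le_sInf fun _ hP ↦ hP.le_of_pow_le (hK.trans (sInf_le hP))

theorem Ideal.comap_pow_succ_le {S : Type*} [Ring S] (f : R →+* S) (I : Ideal S) (k : ℕ) :
    I.comap f ^ (k + 1) ≤ (I ^ (k + 1)).comap f := by
  induction k with
  | zero => simp [Submodule.pow_one]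
  | succ k ih =>
    rw [Submodule.pow_succ, Submodule.pow_succ (M := I)]
    refine Ideal.mul_le.2 fun a ha b hb ↦ ?_
    rw [Ideal.mem_comap, map_mul]
    exact Ideal.mul_mem_mul (ih ha) hb

/-- The annihilator of the simple module `R / m` is a prime ideal contained in `m`. -/
theorem Ideal.IsMaximal.exists_isPrimeNC_le {m : Ideal R} (hm : m.IsMaximal) :
    ∃ P : Ideal R, P.IsPrimeNC ∧ P ≤ m := by
  let P : Ideal R :=
    { carrier := {x | ∀ q, x * q ∈ m}
      zero_mem' := by simp
      add_mem' := fun ha hb q ↦ by rw [add_mul]; exact m.add_mem (ha q) (hb q)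
      smul_mem' := fun c x hx q ↦ by
        rw [smul_eq_mul, mul_assoc]; exact m.mul_mem_left c (hx q) }
  have hPm : P ≤ m := fun x hx ↦ by simpa using hx 1
  refine ⟨P, ⟨fun hP ↦ hm.ne_top (top_le_iff.1 (hP ▸ hPm)),
    fun a ha r q ↦ by rw [mul_assoc]; exact ha _, fun a b hab ↦ ?_⟩, hPm⟩
  rw [or_iff_not_imp_right]
  intro hb q
  obtain ⟨p, hp⟩ : ∃ p, b * p ∉ m := by
    by_contra! hcon
    exact hb hcon
  obtain ⟨y, i, hi, hyi⟩ := hm.exists_inv hp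
  have : a * q = a * (q * y) * b * p + a * q * i := by
    calc a * q = a * q * (y * (b * p) + i) := by rw [hyi, mul_one]
      _ = _ := by simp only [mul_add, mul_assoc]
  rw [this]
  exact m.add_mem (hab (q * y) p) (m.mul_mem_left _ hi)

end PrimeRadical

section Artinian

variable {R : Type*} {Q : Type*} [Ring R] [Ring Q] [IsArtinianRing Q] {φ : R →+* Q}

/-- In a left Artinian left quotient ring, a left ideal that is stable under right multiplication
by `R` is two-sided. -/
theorem IsLeftQuotRing.mul_mem_of_mul_map_mem (h : IsLeftQuotRing φ) {I : Ideal Q}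
    (hI : ∀ x ∈ I, ∀ r : R, x * φ r ∈ I) {x : Q} (hx : x ∈ I) (q : Q) : x * q ∈ I := by
  obtain ⟨c, r, hc, hcr⟩ := h.denom q
  let f : I →ₗ[Q] I :=
    { toFun := fun y ↦ ⟨y * φ c, hI y y.2 c⟩
      map_add' := fun y z ↦ by ext; simp [add_mul]
      map_smul' := fun p y ↦ by ext; simp [mul_assoc] }
  have hf : Function.Injective f := fun y z hyz ↦
    Subtype.ext ((h.isUnit c hc).mul_right_cancel (congrArg Subtype.val hyz))
  obtain ⟨y, hy⟩ := IsArtinian.surjective_of_injective_endomorphism f hf ⟨x, hx⟩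
  have hyx : (y : Q) * φ c = x := congrArg Subtype.val hy
  rw [← hyx, mul_assoc, hcr]
  exact hI y y.2 r

theorem IsLeftQuotRing.isPrimeNC_comap (h : IsLeftQuotRing φ) {P : Ideal Q} (hP : P.IsPrimeNC) :
    (P.comap φ).IsPrimeNC := by
  refine ⟨fun hT ↦ hP.1 (P.eq_top_iff_one.2 ?_), fun a ha r ↦ ?_, fun a b hab ↦ ?_⟩
  · have : (1 : R) ∈ P.comap φ := hT ▸ Submodule.mem_top
    simpa using this
  · rw [Ideal.mem_comap, map_mul]
    exact hP.2.1 _ ha _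
  · refine hP.2.2 (φ a) (φ b) fun q ↦ ?_
    let I : Ideal Q := Ideal.span (Set.range fun s ↦ φ (a * s))
    have hI : ∀ x ∈ I, ∀ r : R, x * φ r ∈ I := by
      intro x hx r
      induction hx using Submodule.span_induction with
      | mem x hx =>
        obtain ⟨s, rfl⟩ := hx
        exact Ideal.subset_span ⟨s * r, by simp [mul_assoc]⟩
      | zero => simp
      | add x y _ _ ihx ihy => rw [add_mul]; exact I.add_mem ihx ihy
      | smul p x _ ih => rw [smul_eq_mul, mul_assoc]; exact I.mul_mem_left p ih
    have hIP : ∀ x ∈ I, x * φ b ∈ P := by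
      intro x hx
      induction hx using Submodule.span_induction with
      | mem x hx =>
        obtain ⟨s, rfl⟩ := hx
        simpa using hab s
      | zero => simp
      | add x y _ _ ihx ihy => rw [add_mul]; exact P.add_mem ihx ihy
      | smul p x _ ih => rw [smul_eq_mul, mul_assoc]; exact P.mul_mem_left p ih
    have ha : φ a ∈ I := Ideal.subset_span ⟨1, by simp⟩
    exact hIP _ (h.mul_mem_of_mul_map_mem hI ha q)

/-- The prime radical of `R` is the contraction of the Jacobson radical of its left Artinian left
quotient ring. -/
theorem IsLeftQuotRing.primeRadical_eq_comap_jacobson (h : IsLeftQuotRing φ) :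
    primeRadical R = (Ring.jacobson Q).comap φ := by
  apply le_antisymm
  · rw [Ring.jacobson_eq_sInf_isMaximal]
    refine fun x hx ↦ Submodule.mem_sInf.2 fun m hm ↦ ?_
    obtain ⟨P, hP, hPm⟩ := Ideal.IsMaximal.exists_isPrimeNC_le hm
    exact hPm (Submodule.mem_sInf.1 hx _ (h.isPrimeNC_comap hP))
  · obtain ⟨k, hk⟩ := IsSemiprimaryRing.isNilpotent (R := Q)
    refine le_primeRadical_of_pow_le (k := k) ((Ideal.comap_pow_succ_le φ _ k).trans ?_)
    rw [Submodule.pow_succ, hk, zero_mul]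
    intro x hx
    rw [Ideal.mem_comap, Ideal.zero_eq_bot, Ideal.mem_bot, map_eq_zero_iff φ h.inj] at hx
    rw [hx]
    exact Submodule.zero_mem _

theorem isUnit_of_isUnit_mk_jacobson {x : Q}
    (hx : IsUnit (Ideal.Quotient.mk (Ring.jacobson Q) x)) : IsUnit x := by
  have key : ∀ y : Q, Ideal.Quotient.mk (Ring.jacobson Q) y = 1 → IsUnit y := by
    intro y hy
    have hmem : y - 1 ∈ Ring.jacobson Q := by
      rw [← Ideal.Quotient.eq_zero_iff_mem, map_sub, hy, map_one, sub_self]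
    obtain ⟨k, hk⟩ := IsSemiprimaryRing.isNilpotent (R := Q)
    have hnil : IsNilpotent (y - 1) := ⟨k, by
      have := Ideal.pow_mem_pow hmem k
      rwa [hk, Ideal.zero_eq_bot, Ideal.mem_bot] at this⟩
    simpa using hnil.isUnit_one_add
  obtain ⟨z, hxz, hzx⟩ := isUnit_iff_exists.1 hx
  obtain ⟨d, rfl⟩ := Ideal.Quotient.mk_surjective z
  rw [← map_mul] at hxz hzx
  obtain ⟨u, hu⟩ := (key _ hxz).exists_right_inv
  obtain ⟨v, hv⟩ := (key _ hzx).exists_left_inv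
  rw [mul_assoc] at hu
  rw [← mul_assoc] at hv
  exact isUnit_iff_exists.2 ⟨d * u, hu, by rwa [← left_inv_eq_right_inv hv hu]⟩

end Artinian

/-- **Proposition (`b13Sep12`.(4),(5)).** Let `R` be a ring with a left Artinian left
quotient ring `Q = C⁻¹R`, `n` its prime radical and `R̄ = R/n` (realized by a surjective
`π` with kernel `n`).  Then:
(1) `C' = C`: for `c ∈ R`, `c` is regular in `R` iff `c + n` is regular in `R̄`;
(2) `R̄` is a semiprime left Goldie ring and the set `C̄` of regular elements of `R̄`
equals `{c + n : c ∈ C}`, i.e. the image of `C` under `π`. -/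
theorem factor_by_prime_radical_is_semiprime_goldie
    {R : Type u} [Ring R] {Q : Type v} [Ring Q] (φ : R →+* Q)
    (hquot : IsLeftQuotRing φ) (hart : IsArtinianRing Q)
    {Rbar : Type w} [Ring Rbar] (π : R →+* Rbar)
    (hπsurj : Function.Surjective π) (hπker : RingHom.ker π = primeRadical R) :
    (∀ c : R, IsRegElem c ↔ IsRegElem (π c)) ∧
    IsSemiprimeRing Rbar ∧ IsLeftGoldie Rbar ∧
    {x : Rbar | IsRegElem x} = π '' regSet R := by
  have hn := hquot.primeRadical_eq_comap_jacobson
  have hker : ∀ x, π x = 0 ↔ φ x ∈ Ring.jacobson Q := fun x ↦ by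
    rw [← RingHom.mem_ker, hπker, hn, Ideal.mem_comap]
  let p := Ideal.Quotient.mk (Ring.jacobson Q)
  have hp : ∀ x, p x = 0 ↔ x ∈ Ring.jacobson Q := fun x ↦ Ideal.Quotient.eq_zero_iff_mem
  have hle : RingHom.ker π ≤ RingHom.ker (p.comp φ) := fun x hx ↦
    (hp _).2 ((hker x).1 hx)
  let ψ : Rbar →+* Q ⧸ Ring.jacobson Q := π.liftOfSurjective hπsurj ⟨p.comp φ, hle⟩
  have hψ : ∀ x, ψ (π x) = p (φ x) := fun x ↦
    RingHom.liftOfRightInverse_comp_apply π _ _ ⟨p.comp φ, hle⟩ x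
  have hψinj : Function.Injective ψ := by
    refine (injective_iff_map_eq_zero ψ).2 fun a ha ↦ ?_
    obtain ⟨x, rfl⟩ := hπsurj a
    rwa [hker, ← hp, ← hψ]
  have hC : ∀ c : R, IsRegElem c ↔ IsRegElem (π c) := by
    refine fun c ↦ ⟨fun hc ↦ ?_, fun hc ↦ ?_⟩
    · have hu : IsUnit (ψ (π c)) := hψ c ▸ (hquot.isUnit c hc).map p
      refine ⟨fun x hx ↦ hψinj ?_, fun x hx ↦ hψinj ?_⟩
      · rwa [map_zero, ← hu.mul_right_eq_zero, ← map_mul, map_eq_zero_iff ψ hψinj]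
      · rwa [map_zero, ← hu.mul_left_eq_zero, ← map_mul, map_eq_zero_iff ψ hψinj]
    · have hu : IsUnit (φ c) := by
        refine isUnit_of_isUnit_mk_jacobson (IsArtinianRing.isUnit_iff_isRightRegular.2 ?_)
        refine isRightRegular_iff_left_eq_zero_of_mul.2 fun y hy ↦ ?_
        obtain ⟨q, rfl⟩ := Ideal.Quotient.mk_surjective y
        obtain ⟨s, r, hs, hsr⟩ := hquot.denom q
        have hsu : IsUnit (p (φ s)) := (hquot.isUnit s hs).map p
        rw [← hsu.mul_right_eq_zero, ← map_mul, hsr, ← hψ, map_eq_zero_iff ψ hψinj]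
        refine hc.2 _ (hψinj ?_)
        rw [map_mul, hψ, hψ, map_zero, ← hsr, map_mul, mul_assoc]
        exact mul_eq_zero_of_right _ hy
      refine ⟨fun x hx ↦ hquot.inj ?_, fun x hx ↦ hquot.inj ?_⟩
      · rw [map_zero, ← hu.mul_right_eq_zero, ← map_mul, hx, map_zero]
      · rw [map_zero, ← hu.mul_left_eq_zero, ← map_mul, hx, map_zero]
  have hψquot : IsLeftQuotRing ψ := by
    refine ⟨hψinj, fun a ha ↦ ?_, fun y ↦ ?_⟩
    · obtain ⟨c, rfl⟩ := hπsurj a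
      exact hψ c ▸ (hquot.isUnit c ((hC c).2 ha)).map p
    · obtain ⟨q, rfl⟩ := Ideal.Quotient.mk_surjective y
      obtain ⟨c, r, hc, hcr⟩ := hquot.denom q
      exact ⟨π c, π r, (hC c).1 hc, by rw [hψ, hψ, ← hcr, map_mul]⟩
  refine ⟨hC, ?_, hψquot.isLeftGoldie, ?_⟩
  · rintro I - ⟨k, hk⟩
    have hI : I.comap π ≤ primeRadical R := by
      refine le_primeRadical_of_pow_le (k := k) ((Ideal.comap_pow_succ_le π I k).trans ?_)
      rw [hk, ← hπker]
      exact le_rfl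
    refine (Submodule.eq_bot_iff _).2 fun a ha ↦ ?_
    obtain ⟨x, rfl⟩ := hπsurj a
    rw [← RingHom.mem_ker, hπker]
    exact hI ha
  · ext a
    constructor
    · intro ha
      obtain ⟨c, rfl⟩ := hπsurj a
      exact ⟨c, (hC c).2 ha, rfl⟩
    · rintro ⟨c, hc, rfl⟩
      exact (hC c).1 hc
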